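/- arXiv:1601.06682 — 4 statements merged into one kernel-verified Lean document; each statement's English description precedes it below -/
import Mathlib

section
/- Let n ≥ 1 be an integer, let m_1, …, m_{2n} be positive integers, and write the type-m matrix P(m) = !![a,b;c,d]. Then 0 < a, a ≤ c, 0 ≤ b − m_1·a < a, and 0 < d − m_1·c ≤ c. -/
/-!
Write `P(m) = !![a, b; c, d]` and put `x = b - m₁ a`, `y = d - m₁ c`, so that `!![a, x; c, y]` is
`P(m) * U ^ (-m₁)`. The claim `0 < a ≤ c`, `0 ≤ x < a`, `0 < y ≤ c` is proved by induction on `n`.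
For `n = 1` the matrix `!![a, x; c, y]` is `T ^ m₂ = !![1, 0; m₂, 1]`. Passing from `n` to `n + 1`
multiplies on the left by `T ^ q * U ^ p` with `p, q > 0` (`typeM_succ`), which replaces the first
row by itself plus `p` times the second, then the second by itself plus `q` times the new first;
both operations together preserve the inequalities.
-/

open Matrix

/-- The matrix `T = !![1,0;1,1]` acting on the numerical Grothendieck group. -/
def Tmat : Matrix (Fin 2) (Fin 2) ℤ := !![1, 0; 1, 1]

/-- The matrix `U = !![1,1;0,1]`. -/
def Umat : Matrix (Fin 2) (Fin 2) ℤ := !![1, 1; 0, 1]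

/-- The type-`m` matrix
`P(m) = T^{m_{2n}} * U^{m_{2n-1}} * T^{m_{2n-2}} * U^{m_{2n-3}} * ⋯ * T^{m_2} * U^{m_1}`. -/
def typeM (n : ℕ) (m : ℕ → ℕ) : Matrix (Fin 2) (Fin 2) ℤ :=
  ((List.range n).map (fun i => Tmat ^ m (2 * (n - i)) * Umat ^ m (2 * (n - i) - 1))).prod

theorem Tmat_pow (k : ℕ) : Tmat ^ k = !![1, 0; (k : ℤ), 1] := by
  induction k with
  | zero => simp [Matrix.one_fin_two]
  | succ k ih => rw [pow_succ, ih, Tmat]; simp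

theorem Umat_pow (k : ℕ) : Umat ^ k = !![1, (k : ℤ); 0, 1] := by
  induction k with
  | zero => simp [Matrix.one_fin_two]
  | succ k ih => rw [pow_succ, ih, Umat]; simp [add_comm]

theorem typeM_succ (n : ℕ) (m : ℕ → ℕ) :
    typeM (n + 1) m = Tmat ^ m (2 * n + 2) * Umat ^ m (2 * n + 1) * typeM n m := by
  simp [typeM, List.range_succ_eq_map, Function.comp_def, mul_add]

theorem typeM_entry_bounds (n : ℕ) (hn : 1 ≤ n) (m : ℕ → ℕ)
    (hm : ∀ i, 1 ≤ i → i ≤ 2 * n → 0 < m i) :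
    0 < typeM n m 0 0 ∧
    typeM n m 0 0 ≤ typeM n m 1 0 ∧
    0 ≤ typeM n m 0 1 - (m 1 : ℤ) * typeM n m 0 0 ∧
    typeM n m 0 1 - (m 1 : ℤ) * typeM n m 0 0 < typeM n m 0 0 ∧
    0 < typeM n m 1 1 - (m 1 : ℤ) * typeM n m 1 0 ∧
    typeM n m 1 1 - (m 1 : ℤ) * typeM n m 1 0 ≤ typeM n m 1 0 := by
  induction n, hn using Nat.le_induction with
  | base =>
    have h2 : 0 < m 2 := hm 2 (by norm_num) (by norm_num)
    have h : typeM 1 m = !![1, (m 1 : ℤ); (m 2 : ℤ), m 2 * m 1 + 1] := by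
      simp [typeM, Tmat_pow, Umat_pow]
    simp only [h, Matrix.of_apply, Matrix.cons_val', Matrix.cons_val_zero, Matrix.cons_val_one,
      Matrix.cons_val_fin_one]
    refine ⟨by norm_num, by omega, by linarith, by linarith, by linarith, ?_⟩
    have : (1 : ℤ) ≤ m 2 := by exact_mod_cast h2
    linarith
  | succ n hn ih =>
    obtain ⟨h1, h2, h3, h4, h5, h6⟩ := ih fun i hi hi' => hm i hi (by omega)
    have hp : (0 : ℤ) < m (2 * n + 1) := by exact_mod_cast hm (2 * n + 1) (by omega) (by omega)
    have hq : (0 : ℤ) < m (2 * n + 2) := by exact_mod_cast hm (2 * n + 2) (by omega) (by omega)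
    rw [typeM_succ, Tmat_pow, Umat_pow]
    generalize (m (2 * n + 1) : ℤ) = p at *
    generalize (m (2 * n + 2) : ℤ) = q at *
    simp only [Matrix.mul_apply, Fin.sum_univ_two, Matrix.of_apply, Matrix.cons_val',
      Matrix.cons_val_zero, Matrix.cons_val_one, Matrix.cons_val_fin_one]
    generalize typeM n m 0 0 = a at *
    generalize typeM n m 1 0 = c at *
    -- Replace the second column by its translates `x = b - m₁ a` and `y = d - m₁ c`.
    obtain ⟨x, hx⟩ : ∃ x, x = typeM n m 0 1 - m 1 * a := ⟨_, rfl⟩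
    obtain ⟨y, hy⟩ : ∃ y, y = typeM n m 1 1 - m 1 * c := ⟨_, rfl⟩
    rw [← hx] at h3 h4
    rw [← hy] at h5 h6
    rw [eq_add_of_sub_eq hx.symm, eq_add_of_sub_eq hy.symm]
    have hc : 0 < c := h1.trans_le h2
    have ha' : 0 < a + p * c := by positivity
    have hx' : 0 ≤ x + p * y := by positivity
    have hxa : x + p * y < a + p * c := by
      linarith [mul_le_mul_of_nonneg_left h6 hp.le]
    have hqx : 0 ≤ q * (x + p * y) := by positivity
    have hqxa : q * (x + p * y) ≤ q * (a + p * c) := mul_le_mul_of_nonneg_left hxa.le hq.le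
    have hqa : a + p * c ≤ q * (a + p * c) := le_mul_of_one_le_left ha'.le hq
    refine ⟨?_, ?_, ?_, ?_, ?_, ?_⟩ <;> linarith
end

section
/- Every matrix A ∈ SL(2,ℤ) with trace strictly greater than 2 is conjugate in SL(2,ℤ) to a reduced matrix, i.e. there exist Q ∈ SL(2,ℤ) and a reduced matrix A' with Q * A * Q⁻¹ = A'. -/
open Matrix

/-!
The lower-left entries of the conjugates of `A = !![a, b; c, d]` are the values of the binary
quadratic form `f(u, v) = c v² + (a - d) u v - b u²` at coprime pairs `(u, v)`. Its discriminant
`(a + d)² - 4` is positive, so `f` takes positive values (`exists_conj_pos`). Among all conjugates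
with positive lower-left entry, take one where that entry `c` is smallest, and conjugate by a
power of the unipotent upper triangular generator to get `1 ≤ a ≤ c`. Then `c < d` is automatic
(`lt_of_minimal`): otherwise one of `f(1, 0) = -b`, `f(1, 1)`, `f(-1, 1)` would be a positive
value of `f` below `c`.
-/

/-- `!![a, b; c, d]` is conjugate to `A` in `SL(2, ℤ)`. The inverse of the conjugating matrix is
written as its adjugate, which agrees with it because the determinant is one. -/
def ConjTo (A : Matrix (Fin 2) (Fin 2) ℤ) (a b c d : ℤ) : Prop :=
  ∃ Q : Matrix (Fin 2) (Fin 2) ℤ, Q.det = 1 ∧ Q * A * Q.adjugate = !![a, b; c, d]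

namespace ConjTo

variable {A : Matrix (Fin 2) (Fin 2) ℤ} {a b c d : ℤ}

theorem self (A : Matrix (Fin 2) (Fin 2) ℤ) : ConjTo A (A 0 0) (A 0 1) (A 1 0) (A 1 1) :=
  ⟨1, by simp, by simpa using Matrix.eta_fin_two A⟩

/-- Conjugation by `!![r, s; u, v]`, written out in entries. -/
theorem conj (h : ConjTo A a b c d) {r s u v : ℤ} (hR : r * v - s * u = 1) :
    ConjTo A ((r * a + s * c) * v - (r * b + s * d) * u)
      ((r * b + s * d) * r - (r * a + s * c) * s)
      (c * v ^ 2 + (a - d) * u * v - b * u ^ 2)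
      ((u * b + v * d) * r - (u * a + v * c) * s) := by
  obtain ⟨Q, hQ, hQA⟩ := h
  refine ⟨!![r, s; u, v] * Q, by rw [Matrix.det_mul, hQ, Matrix.det_fin_two_of, hR, one_mul], ?_⟩
  have : !![r, s; u, v] * Q * A * (!![r, s; u, v] * Q).adjugate
      = !![r, s; u, v] * (Q * A * Q.adjugate) * (!![r, s; u, v]).adjugate := by
    rw [Matrix.adjugate_mul_distrib]
    simp only [Matrix.mul_assoc]
  rw [this, hQA, Matrix.adjugate_fin_two_of]
  ext i j
  fin_cases i <;> fin_cases j <;> simp [Matrix.mul_apply, Fin.sum_univ_two] <;> ring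

theorem det (h : ConjTo A a b c d) (hA : A.det = 1) : a * d - b * c = 1 := by
  obtain ⟨Q, hQ, hQA⟩ := h
  have := congrArg Matrix.det hQA
  rw [Matrix.det_mul, Matrix.det_mul, Matrix.det_adjugate, hQ, hA, Matrix.det_fin_two_of] at this
  simpa using this.symm

theorem trace (h : ConjTo A a b c d) : a + d = A.trace := by
  obtain ⟨Q, hQ, hQA⟩ := h
  have := congrArg Matrix.trace hQA
  rw [Matrix.trace_mul_comm, ← Matrix.mul_assoc, Matrix.adjugate_mul, hQ, one_smul, one_mul,
    Matrix.trace_fin_two_of] at this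
  exact this.symm

/-- Any coprime pair is the bottom row of a conjugating matrix, so a positive value of the form
at `(u, v)`, divided by `gcd(u, v)²`, is a lower-left entry. -/
theorem exists_pos_of_value_pos (h : ConjTo A a b c d) {u v : ℤ}
    (hpos : 0 < c * v ^ 2 + (a - d) * u * v - b * u ^ 2) :
    ∃ a' b' c' d', ConjTo A a' b' c' d' ∧ 0 < c' := by
  have hg : 0 < Int.gcd u v := by
    rw [Int.gcd_pos_iff]
    by_contra! h0
    simp [h0.1, h0.2] at hpos
  obtain ⟨u', v', hcop, hu, hv⟩ := Int.exists_gcd_one hg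
  obtain ⟨x, y, hxy⟩ := Int.isCoprime_iff_gcd_eq_one.mpr hcop
  refine ⟨_, _, _, _, h.conj (r := y) (s := -x) (u := u') (v := v') (by linarith), ?_⟩
  set g : ℤ := (Int.gcd u v : ℤ)
  have e : c * v ^ 2 + (a - d) * u * v - b * u ^ 2
      = g ^ 2 * (c * v' ^ 2 + (a - d) * u' * v' - b * u' ^ 2) := by
    rw [hu, hv]; ring
  rw [e] at hpos
  exact pos_of_mul_pos_right hpos (sq_nonneg g)

end ConjTo

theorem exists_conj_pos (A : Matrix (Fin 2) (Fin 2) ℤ) (hA : A.det = 1) (htr : 2 < A.trace) :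
    ∃ a b c d, ConjTo A a b c d ∧ 0 < c := by
  have h := ConjTo.self A
  have hdet := h.det hA
  have htr' := h.trace
  generalize A 0 0 = a at *
  generalize A 0 1 = b at *
  generalize A 1 0 = c at *
  generalize A 1 1 = d at *
  have hD : 0 < (a + d) ^ 2 - 4 := by rw [htr']; nlinarith
  rcases lt_trichotomy c 0 with hc | hc | hc
  · -- The vertex of the concave function `v ↦ f(u, v)`, scaled to be integral; the value there
    -- is `-c` times the discriminant.
    apply h.exists_pos_of_value_pos (u := -2 * c) (v := a - d)
    have e : c * (a - d) ^ 2 + (a - d) * (-2 * c) * (a - d) - b * (-2 * c) ^ 2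
        = -c * ((a + d) ^ 2 - 4) := by
      linear_combination (4 * c) * hdet
    rw [e]
    exact mul_pos (by linarith) hD
  · exfalso
    subst hc
    rcases Int.eq_one_or_neg_one_of_mul_eq_one' (show a * d = 1 by linarith) with h1 | h1 <;> omega
  · exact ⟨a, b, c, d, h, hc⟩

/-- The hypotheses `h1`, `h2`, `h3` say that none of the form values at `(1, 0)`, `(1, 1)`,
`(-1, 1)` lies strictly between `0` and `c`. -/
theorem lt_of_minimal {a b c d : ℤ} (hdet : a * d - b * c = 1) (htr : 2 < a + d)
    (ha : 0 < a) (hac : a ≤ c)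
    (h1 : 0 < -b → c ≤ -b)
    (h2 : 0 < c + (a - d) - b → c ≤ c + (a - d) - b)
    (h3 : 0 < c - (a - d) - b → c ≤ c - (a - d) - b) : c < d := by
  by_contra! hdc
  rcases lt_trichotomy b 0 with hb | hb | hb
  · -- Here `c² ≤ -b c = 1 - a d`, while `-d < a - 2 ≤ c - 2` makes the right side too small.
    have hb' := h1 (by linarith)
    have : c * c ≤ -b * c := mul_le_mul_of_nonneg_right hb' (by linarith)
    have : a * (-d) ≤ a * (c - 3) := mul_le_mul_of_nonneg_left (by linarith) ha.le
    rcases le_or_gt 3 c with h | h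
    · have : a * (c - 3) ≤ c * (c - 3) := mul_le_mul_of_nonneg_right hac (by linarith)
      nlinarith
    · have : a * (c - 3) < 0 := mul_neg_of_pos_of_neg ha (by linarith)
      nlinarith
  · subst hb
    rcases Int.eq_one_or_neg_one_of_mul_eq_one' (show a * d = 1 by linarith) with h | h <;> omega
  · have hc : 0 < c := by linarith
    have hd : 0 < d := by
      have : 0 < b * c := mul_pos hb hc
      exact pos_of_mul_pos_right (by linarith : 0 < a * d) ha.le
    have hba : b < a := by
      have : a * d ≤ a * c := mul_le_mul_of_nonneg_left hdc ha.le
      exact lt_of_mul_lt_mul_right (by linarith : b * c < a * c) hc.le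
    have hbd : b < d := by
      have : a * d ≤ c * d := mul_le_mul_of_nonneg_right hac hd.le
      exact lt_of_mul_lt_mul_right (by linarith : b * c < d * c) hc.le
    rcases le_total a d with h | h
    · linarith [h2 (by linarith)]
    · linarith [h3 (by linarith)]

theorem conj_to_reduced (A : Matrix (Fin 2) (Fin 2) ℤ) (hA : A.det = 1) (htr : 2 < A.trace) :
    ∃ (Q : Matrix (Fin 2) (Fin 2) ℤ) (a b c d : ℤ),
      Q.det = 1 ∧ 0 < a ∧ a ≤ c ∧ c < d ∧ Q * A * Q⁻¹ = !![a, b; c, d] := by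
  classical
  have hex : ∃ n : ℕ, 0 < n ∧ ∃ a b d, ConjTo A a b (n : ℤ) d := by
    obtain ⟨a, b, c, d, h, hc⟩ := exists_conj_pos A hA htr
    lift c to ℕ using hc.le
    exact ⟨c, by exact_mod_cast hc, a, b, d, h⟩
  obtain ⟨hn, a₀, b₀, d₀, h₀⟩ := Nat.find_spec hex
  have hmin : ∀ a b c d, ConjTo A a b c d → 0 < c → ((Nat.find hex : ℕ) : ℤ) ≤ c := by
    intro a b c d h hc
    lift c to ℕ using hc.le
    exact_mod_cast Nat.find_min' hex ⟨by exact_mod_cast hc, a, b, d, h⟩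
  generalize Nat.find hex = n at *
  have hc : (0 : ℤ) < n := by exact_mod_cast hn
  -- The translation that moves the upper-left entry `a₀` to its residue in `[1, n]`.
  obtain ⟨a, b, d, h, ha, hac⟩ : ∃ a b d, ConjTo A a b (n : ℤ) d ∧ 0 < a ∧ a ≤ n := by
    have h := h₀.conj (r := 1) (s := -((a₀ - 1) / n)) (u := 0) (v := 1) (by ring)
    have e := Int.emod_add_mul_ediv (a₀ - 1) n
    have e1 := Int.emod_nonneg (a₀ - 1) hc.ne'
    have e2 := Int.emod_lt_of_pos (a₀ - 1) hc
    rw [show (n : ℤ) * 1 ^ 2 + (a₀ - d₀) * 0 * 1 - b₀ * 0 ^ 2 = n by ring] at h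
    exact ⟨_, _, _, h, by nlinarith, by nlinarith⟩
  have hval : ∀ r s u v : ℤ, r * v - s * u = 1 →
      0 < n * v ^ 2 + (a - d) * u * v - b * u ^ 2 →
      (n : ℤ) ≤ n * v ^ 2 + (a - d) * u * v - b * u ^ 2 :=
    fun r s u v hR hp => hmin _ _ _ _ (h.conj hR) hp
  have hcd : (n : ℤ) < d := by
    refine lt_of_minimal (h.det hA) (by rw [h.trace]; exact htr) ha hac ?_ ?_ ?_
    · have := hval 0 (-1) 1 0 (by norm_num)
      ring_nf at this ⊢; exact this
    · have := hval 1 0 1 1 (by norm_num)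
      ring_nf at this ⊢; exact this
    · have := hval 1 0 (-1) 1 (by norm_num)
      ring_nf at this ⊢; exact this
  obtain ⟨Q, hQ, hQA⟩ := h
  refine ⟨Q, a, b, n, d, hQ, ha, hac, hcd, ?_⟩
  rw [Matrix.inv_def, hQ, Ring.inverse_one, one_smul, hQA]
end

section
/- Let A = !![a,b;c,d] and A' = !![a',b';c',d'] be reduced matrices in SL(2,ℤ). If c/a = c'/a' (as rational numbers, equivalently a·c' = a'·c) and ⌊(d − 1)/c⌋ = ⌊(d' − 1)/c'⌋, then A = A'. (This expresses that a reduced matrix is uniquely determined by its LLS-period data, the key injectivity behind the fact that the LLS-period is a complete conjugacy invariant of reduced matrices.) -/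
/-!
The determinant condition makes each first column primitive, so the ratio `c / a` together with
`0 < a` determines `(a, c)`. With the first column fixed, the determinant condition gives
`d ≡ d'` modulo `c`, and equality of the floors gives `|d - d'| < c`; hence `d = d'`, and then
`b = b'`.
-/

open Matrix

theorem reduced_determined_by_invariants
    (a b c d a' b' c' d' : ℤ)
    (hdet : (!![a, b; c, d] : Matrix (Fin 2) (Fin 2) ℤ).det = 1)
    (hdet' : (!![a', b'; c', d'] : Matrix (Fin 2) (Fin 2) ℤ).det = 1)
    (hred : 0 < a ∧ a ≤ c ∧ c < d)
    (hred' : 0 < a' ∧ a' ≤ c' ∧ c' < d')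
    (hratio : a * c' = a' * c)
    (hfloor : ⌊((d : ℚ) - 1) / (c : ℚ)⌋ = ⌊((d' : ℚ) - 1) / (c' : ℚ)⌋) :
    (!![a, b; c, d] : Matrix (Fin 2) (Fin 2) ℤ) = !![a', b'; c', d'] := by
  obtain ⟨ha, hac, hcd⟩ := hred
  obtain ⟨ha', hac', hcd'⟩ := hred'
  rw [Matrix.det_fin_two_of] at hdet hdet'
  have haa : a = a' := by
    apply Int.dvd_antisymm ha.le ha'.le
    · exact ⟨a' * d - b * c', by linear_combination (-a') * hdet + b * hratio⟩
    · exact ⟨a * d' - b' * c, by linear_combination (-a) * hdet' - b' * hratio⟩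
  subst haa
  have hcc : c' = c := mul_left_cancel₀ ha.ne' hratio
  subst hcc
  have hc : 0 < c' := ha.trans_le hac
  have hcQ : (0 : ℚ) < c' := by exact_mod_cast hc
  have hlt := Int.abs_sub_lt_one_of_floor_eq_floor hfloor
  rw [← sub_div, abs_div, abs_of_pos hcQ, div_lt_one hcQ, sub_sub_sub_cancel_right] at hlt
  have hlt' : |d - d'| < c' := by exact_mod_cast hlt
  -- Multiplying `a * (d - d') = c' * (b - b')` by `d`, the inverse of `a` modulo `c'`.
  have hdvd : c' ∣ d - d' :=
    ⟨d * (b - b') - b * (d - d'), by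
      linear_combination (-(d - d')) * hdet + d * (hdet - hdet')⟩
  have hdd : d = d' := sub_eq_zero.mp (Int.eq_zero_of_abs_lt_dvd hdvd hlt')
  subst hdd
  have hbb : b = b' := mul_right_cancel₀ hc.ne' (by linarith)
  rw [hbb]
end

section
/- Let S := !![0,1;−1,0], T := !![1,0;1,1], and U := !![1,1;0,1] in SL(2,ℤ), let n ≥ 1 be an integer, and let m_1, …, m_{2n} be positive integers. If n is odd, then S² * T^{m_{2n}} * S * T^{−m_{2n−1}} * S * T^{m_{2n−2}} * S * T^{−m_{2n−3}} * S * ⋯ * T^{m_2} * S * T^{−m_1} * S = T^{m_{2n}} * U^{m_{2n−1}} * ⋯ * T^{m_2} * U^{m_1}; if n is even, then the same identity holds with the initial factor S² omitted. (This identifies the numerical class [F_m] of the type-m autoequivalence F_m, defined as a word in the Fourier–Mukai transform S and the twist T, with the product of the matrices T^{m_{2i}} U^{m_{2i−1}}.) -/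
/-!
Since `S ^ 2 = -1` is central and `S T⁻¹ S⁻¹ = U`, conjugating powers gives
`S T ^ (-k) S = -U ^ k`. Hence each of the `n` blocks of `word n m` is minus the corresponding
block of `typeMSL n m`, so `word n m = (-1) ^ n * typeMSL n m`. The factor `S ^ 2 = -1`
compensates the sign precisely when `n` is odd.
-/

open Matrix

/-- The numerical class of the Fourier–Mukai transform `Φ_P`, `S = !![0,1;-1,0]` in `SL(2,ℤ)`. -/
def Sg : Matrix.SpecialLinearGroup (Fin 2) ℤ :=
  ⟨!![0, 1; -1, 0], by norm_num [Matrix.det_fin_two_of]⟩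

/-- The numerical class of the twist `- ⊗ O_E(x_0)`, `T = !![1,0;1,1]` in `SL(2,ℤ)`. -/
def Tg : Matrix.SpecialLinearGroup (Fin 2) ℤ :=
  ⟨!![1, 0; 1, 1], by norm_num [Matrix.det_fin_two_of]⟩

/-- The matrix `U = !![1,1;0,1]` in `SL(2,ℤ)`. -/
def Ug : Matrix.SpecialLinearGroup (Fin 2) ℤ :=
  ⟨!![1, 1; 0, 1], by norm_num [Matrix.det_fin_two_of]⟩

/-- The word `T^{m_{2n}} S T^{-m_{2n-1}} S ⋯ T^{m_2} S T^{-m_1} S` in `S` and `T`. -/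
def word (n : ℕ) (m : ℕ → ℕ) : Matrix.SpecialLinearGroup (Fin 2) ℤ :=
  ((List.range n).map
    (fun i => Tg ^ m (2 * (n - i)) * Sg * Tg ^ (-(m (2 * (n - i) - 1) : ℤ)) * Sg)).prod

/-- The type-`m` matrix `P(m) = T^{m_{2n}} U^{m_{2n-1}} ⋯ T^{m_2} U^{m_1}`. -/
def typeMSL (n : ℕ) (m : ℕ → ℕ) : Matrix.SpecialLinearGroup (Fin 2) ℤ :=
  ((List.range n).map (fun i => Tg ^ m (2 * (n - i)) * Ug ^ m (2 * (n - i) - 1))).prod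

theorem Sg_sq : Sg ^ 2 = -1 := by
  decide

theorem conj_Tg_inv : Sg * Tg⁻¹ * Sg⁻¹ = Ug := by
  rw [mul_inv_eq_iff_eq_mul, mul_inv_eq_iff_eq_mul]
  decide

theorem Sg_Tg_zpow_Sg (k : ℕ) : Sg * Tg ^ (-(k : ℤ)) * Sg = -Ug ^ k := by
  have hS : Sg = -Sg⁻¹ := by
    rw [← neg_one_mul, ← Sg_sq, pow_two, mul_inv_cancel_right]
  calc Sg * Tg ^ (-(k : ℤ)) * Sg = Sg * Tg ^ (-(k : ℤ)) * -Sg⁻¹ := by rw [← hS]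
    _ = -Ug ^ k := by
      rw [mul_neg, ← conj_Tg_inv, conj_pow, inv_pow, _root_.zpow_neg, _root_.zpow_natCast]

theorem word_eq_neg_one_pow_mul (n : ℕ) (m : ℕ → ℕ) :
    word n m = (-1) ^ n * typeMSL n m := by
  unfold word typeMSL
  generalize hl : List.range n = l
  have hlen : n = l.length := by rw [← hl, List.length_range]
  -- The exponents involve `n` as well, so only the sign exponent becomes the list length.
  rw [show ((-1 : Matrix.SpecialLinearGroup (Fin 2) ℤ) ^ n) = (-1) ^ l.length by rw [← hlen]]
  clear hlen hl
  induction l with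
  | nil => simp
  | cons a l ih =>
    rw [List.map_cons, List.prod_cons, ih, List.map_cons, List.prod_cons, List.length_cons,
      mul_assoc (Tg ^ _), mul_assoc (Tg ^ _), Sg_Tg_zpow_Sg, pow_succ]
    rcases neg_one_pow_eq_or (Matrix.SpecialLinearGroup (Fin 2) ℤ) l.length with h | h <;>
      simp [h, mul_assoc]

theorem word_eq_typeM (n : ℕ) (hn : 1 ≤ n) (m : ℕ → ℕ)
    (hm : ∀ i, 1 ≤ i → i ≤ 2 * n → 0 < m i) :
    (Odd n → Sg ^ 2 * word n m = typeMSL n m) ∧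
    (Even n → word n m = typeMSL n m) := by
  rw [word_eq_neg_one_pow_mul, Sg_sq]
  constructor
  · intro h
    rw [h.neg_one_pow, neg_one_mul, neg_one_mul, neg_neg]
  · intro h
    rw [h.neg_one_pow, one_mul]
end
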